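/- For every α ≥ 0, every t₀ > 0 and every x ∈ ℝ, one has lim_{t→∞} ∫₀^{t₀/t} ∫_ℝ p_{1−s}( x/√t − y )² · ( s |y| )^α dy ds = 0. -/

import Mathlib

open MeasureTheory Filter Set

/-- The one-dimensional heat kernel `p_t(x) = (2πt)^{-1/2} exp(-x²/(2t))`. -/
noncomputable def heatKernel (t x : ℝ) : ℝ :=
  (2 * Real.pi * t) ^ (-(1:ℝ)/2) * Real.exp (-x ^ 2 / (2 * t))

/-!
While `T - s` stays in `[T / 2, T]`, the squared kernel `p_{T-s}(z - y)²` is at most a multiple of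
`exp (z² / T) exp (-y² / (2T))`, uniformly in `s`. Against `(s|y|)^α = s^α |y|^α` this leaves a
Gaussian moment, finite for `α > -1`, times `∫₀^ε s^α ds`, which vanishes as `ε → 0`.
-/

section Integrability

variable {E : Type*} [NormedAddCommGroup E] {f : ℝ → E}

theorem integrable_comp_abs (hf : IntegrableOn f (Ioi 0)) : Integrable fun x => f |x| := by
  have hIoi : IntegrableOn (fun x => f |x|) (Ioi 0) :=
    hf.congr_fun (fun x hx => by rw [abs_of_pos hx]) measurableSet_Ioi
  have hIio : IntegrableOn (fun x => f |x|) (Iio 0) := by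
    have hneg : IntegrableOn (fun x => f (-x)) (Iio 0) :=
      IntegrableOn.comp_neg_Iio (by rwa [neg_zero])
    exact hneg.congr_fun (fun x hx => by rw [abs_of_neg hx]) measurableSet_Iio
  rw [← integrableOn_univ, ← Iio_union_Ici (a := (0 : ℝ)), integrableOn_union,
    integrableOn_Ici_iff_integrableOn_Ioi]
  exact ⟨hIio, hIoi⟩

theorem tendsto_setIntegral_Ioo_nhds_zero [NormedSpace ℝ E] {a b : ℝ} (hab : a < b)
    (hf : IntegrableOn f (Ioo a b)) :
    Tendsto (fun c => ∫ x in Ioo a c, f x) (nhds a) (nhds 0) := by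
  have hvol : Tendsto (fun c => volume (Ioo a c)) (nhds a) (nhds 0) := by
    simp only [Real.volume_Ioo]
    exact (ENNReal.continuous_ofReal.comp (continuous_sub_right a)).tendsto' _ _ (by simp)
  have hrestrict : Tendsto (fun c => volume.restrict (Ioo a b) (Ioo a c)) (nhds a) (nhds 0) :=
    tendsto_of_tendsto_of_tendsto_of_le_of_le tendsto_const_nhds hvol
      (fun _ => zero_le) fun _ => Measure.restrict_apply_le _ _
  refine (hf.tendsto_setIntegral_nhds_zero hrestrict).congr' ?_
  filter_upwards [eventually_lt_nhds hab] with c hc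
  rw [Measure.restrict_restrict_of_subset (Ioo_subset_Ioo_right hc.le)]

end Integrability

theorem integrable_abs_rpow_mul_exp_neg_mul_sq {α b : ℝ} (hα : -1 < α) (hb : 0 < b) :
    Integrable fun y : ℝ => |y| ^ α * Real.exp (-b * y ^ 2) := by
  simpa only [sq_abs] using integrable_comp_abs (integrableOn_rpow_mul_exp_neg_mul_sq hb hα)

theorem heatKernel_sq {t : ℝ} (ht : 0 ≤ t) (x : ℝ) :
    heatKernel t x ^ 2 = (2 * Real.pi * t)⁻¹ * Real.exp (-x ^ 2 / t) := by
  have hcoeff : ((2 * Real.pi * t) ^ (-(1:ℝ)/2)) ^ 2 = (2 * Real.pi * t)⁻¹ := by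
    rw [← Real.rpow_natCast, ← Real.rpow_mul (by positivity), ← Real.rpow_neg_one]
    norm_num
  rw [heatKernel, mul_pow, hcoeff, ← Real.exp_nat_mul]
  congr 2
  push_cast
  field_simp

theorem heatKernel_sub_sq_le {a b t : ℝ} (ha : 0 < a) (hat : a ≤ t) (htb : t ≤ b) (z y : ℝ) :
    heatKernel t (z - y) ^ 2 ≤
      (2 * Real.pi * a)⁻¹ * Real.exp (z ^ 2 / b) * Real.exp (-(2 * b)⁻¹ * y ^ 2) := by
  have ht : 0 < t := ha.trans_le hat
  have hb : 0 < b := ht.trans_le htb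
  have hexp : -(z - y) ^ 2 / t ≤ z ^ 2 / b + -(2 * b)⁻¹ * y ^ 2 :=
    calc -(z - y) ^ 2 / t ≤ -(z - y) ^ 2 / b := by
          rw [neg_div, neg_div, neg_le_neg_iff]
          gcongr
      _ ≤ (z ^ 2 - y ^ 2 / 2) / b := by
          gcongr
          nlinarith only [sq_nonneg (2 * z - y)]
      _ = z ^ 2 / b + -(2 * b)⁻¹ * y ^ 2 := by
          field_simp
          ring
  rw [heatKernel_sq ht.le, mul_assoc _ (Real.exp _), ← Real.exp_add]
  gcongr

theorem integral_heatKernel_sub_sq_mul_abs_rpow_le {α a b t : ℝ} (hα : -1 < α) (ha : 0 < a)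
    (hat : a ≤ t) (htb : t ≤ b) (z : ℝ) :
    ∫ y, heatKernel t (z - y) ^ 2 * |y| ^ α ≤
      (2 * Real.pi * a)⁻¹ * Real.exp (z ^ 2 / b) *
        ∫ y : ℝ, |y| ^ α * Real.exp (-(2 * b)⁻¹ * y ^ 2) := by
  have hb : 0 < b := ha.trans_le (hat.trans htb)
  rw [← integral_const_mul]
  refine integral_mono_of_nonneg (Eventually.of_forall fun y => by positivity)
    ((integrable_abs_rpow_mul_exp_neg_mul_sq hα (by positivity)).const_mul _)
    (Eventually.of_forall fun y => ?_)
  calc heatKernel t (z - y) ^ 2 * |y| ^ α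
      ≤ (2 * Real.pi * a)⁻¹ * Real.exp (z ^ 2 / b) * Real.exp (-(2 * b)⁻¹ * y ^ 2) * |y| ^ α := by
        gcongr
        exact heatKernel_sub_sq_le ha hat htb z y
    _ = _ := by ring

theorem integral_heatKernel_sub_sq_mul_rpow {s : ℝ} (hs : 0 ≤ s) (α t z : ℝ) :
    ∫ y, heatKernel t (z - y) ^ 2 * (s * |y|) ^ α =
      (∫ y, heatKernel t (z - y) ^ 2 * |y| ^ α) * s ^ α := by
  rw [← integral_mul_const]
  congr with y
  rw [Real.mul_rpow hs (abs_nonneg y)]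
  ring

theorem norm_setIntegral_heatKernel_sub_sq_mul_rpow_le {α T ε : ℝ} (hα : -1 < α) (hT : 0 < T)
    (hε : ε ≤ T / 2) (z : ℝ) :
    ‖∫ s in Ioo 0 ε, ∫ y, heatKernel (T - s) (z - y) ^ 2 * (s * |y|) ^ α‖ ≤
      (Real.pi * T)⁻¹ * Real.exp (z ^ 2 / T) *
        (∫ y : ℝ, |y| ^ α * Real.exp (-(2 * T)⁻¹ * y ^ 2)) * ∫ s in Ioo 0 ε, s ^ α := by
  have hint : IntegrableOn (fun s : ℝ => s ^ α) (Ioo 0 ε) :=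
    ((intervalIntegral.integrableOn_Ioo_rpow_iff (half_pos hT)).2 hα).mono_set
      (Ioo_subset_Ioo_right hε)
  rw [show Real.pi * T = 2 * Real.pi * (T / 2) by ring, ← integral_const_mul]
  refine norm_integral_le_of_norm_le (hint.const_mul _)
    (ae_restrict_of_forall_mem measurableSet_Ioo fun s ⟨hs, hsε⟩ => ?_)
  have : 0 ≤ ∫ y, heatKernel (T - s) (z - y) ^ 2 * |y| ^ α :=
    integral_nonneg fun y => by positivity
  rw [integral_heatKernel_sub_sq_mul_rpow hs.le, Real.norm_of_nonneg (by positivity)]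
  gcongr
  exact integral_heatKernel_sub_sq_mul_abs_rpow_le hα (half_pos hT) (by linarith) (by linarith) z

theorem tendsto_integral_small_time_general {ι : Type*} {l : Filter ι} {α T : ℝ} {ε z : ι → ℝ}
    (hα : -1 < α) (hT : 0 < T) (hε : Tendsto ε l (nhds 0))
    (hz : IsBoundedUnder (· ≤ ·) l fun i => |z i|) :
    Tendsto (fun i => ∫ s in Ioo 0 (ε i), ∫ y,
        heatKernel (T - s) (z i - y) ^ 2 * (s * |y|) ^ α)
      l (nhds 0) := by
  obtain ⟨R, hR⟩ := hz.eventually_le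
  have hpow : Tendsto (fun i => ∫ s in Ioo 0 (ε i), s ^ α) l (nhds 0) :=
    (tendsto_setIntegral_Ioo_nhds_zero one_pos
      ((intervalIntegral.integrableOn_Ioo_rpow_iff one_pos).2 hα)).comp hε
  set M := ∫ y : ℝ, |y| ^ α * Real.exp (-(2 * T)⁻¹ * y ^ 2)
  have : 0 ≤ M := integral_nonneg fun y => by positivity
  have hbound : Tendsto (fun i => (Real.pi * T)⁻¹ * Real.exp (R ^ 2 / T) * M *
      ∫ s in Ioo 0 (ε i), s ^ α) l (nhds 0) := by
    simpa only [mul_zero] using hpow.const_mul _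
  refine squeeze_zero_norm' ?_ hbound
  filter_upwards [hR, hε.eventually_le_const (half_pos hT)] with i hzi hεi
  have hsq : z i ^ 2 ≤ R ^ 2 := sq_le_sq.2 (hzi.trans (le_abs_self R))
  have hnonneg : 0 ≤ ∫ s in Ioo 0 (ε i), s ^ α :=
    setIntegral_nonneg measurableSet_Ioo fun s hs => Real.rpow_nonneg hs.1.le α
  refine (norm_setIntegral_heatKernel_sub_sq_mul_rpow_le hα hT hεi (z i)).trans ?_
  gcongr

/-- For every `α ≥ 0`, `t₀ > 0` and `x ∈ ℝ`,
`lim_{t→∞} ∫₀^{t₀/t} ∫_ℝ p_{1-s}(x/√t - y)² (s|y|)^α dy ds = 0`. -/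
theorem tendsto_integral_small_time (α : ℝ) (hα : 0 ≤ α) (t₀ : ℝ) (ht₀ : 0 < t₀) (x : ℝ) :
    Tendsto (fun t : ℝ => ∫ s in Ioo (0:ℝ) (t₀ / t), ∫ y : ℝ,
        heatKernel (1 - s) (x / Real.sqrt t - y) ^ 2 * (s * |y|) ^ α)
      atTop (nhds 0) :=
  tendsto_integral_small_time_general (by linarith) one_pos
    (tendsto_const_nhds.div_atTop tendsto_id)
    (tendsto_const_nhds.div_atTop Real.tendsto_sqrt_atTop).abs.isBoundedUnder_le
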